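/- There exists a rank-one transformation T of an infinite σ-finite nonatomic measure space (X, B, μ) that is zero-type but not rationally weakly mixing. -/

import Mathlib

open MeasureTheory Filter Set Pointwise

/-- A rank-one cutting-and-stacking transformation of a subset `X ⊆ ℝ` (with Lebesgue
measure), given by columns `C n` consisting of `h n` levels (open intervals) of width `w n`,
with `pos n j` the left endpoint of the level of height `j` in column `C n`; column `C (n+1)`
is obtained from `C n` by cutting into `r n ≥ 2` subcolumns of equal width, adding `s n k`
spacers above the `k`-th subcolumn, and stacking. -/
structure RankOne where
  X : Set ℝ
  T : ℝ ≃ᵐ ℝ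
  r : ℕ → ℕ
  s : ℕ → ℕ → ℕ
  h : ℕ → ℕ
  w : ℕ → ℝ
  pos : ℕ → ℕ → ℝ
  hr : ∀ n, 2 ≤ r n
  h0 : h 0 = 1
  w0 : w 0 = 1
  pos0 : pos 0 0 = 0
  hrec : ∀ n, h (n + 1) = ∑ k ∈ Finset.range (r n), (h n + s n k)
  wrec : ∀ n, w (n + 1) = w n / (r n : ℝ)
  hX : X = ⋃ n, ⋃ j < h n, Set.Ioo (pos n j) (pos n j + w n)
  disj : ∀ n, ∀ j < h n, ∀ j' < h n, j ≠ j' →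
    Disjoint (Set.Ioo (pos n j) (pos n j + w n)) (Set.Ioo (pos n j') (pos n j' + w n))
  stack : ∀ n, ∀ j < h n, ∀ k < r n,
    pos (n + 1) ((∑ i ∈ Finset.range k, (h n + s n i)) + j) = pos n j + (k : ℝ) * w (n + 1)
  Tmap : ∀ n j, j + 1 < h n → ∀ x ∈ Set.Ioo (pos n j) (pos n j + w n),
    T x = x + (pos n (j + 1) - pos n j)
  Tbij : Set.BijOn (⇑T) X X
  Tpres : MeasurePreserving (⇑T) (volume.restrict X) (volume.restrict X)

namespace RankOne

/-- The level of height `j` in column `C n`. -/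
def lvl (S : RankOne) (n j : ℕ) : Set ℝ := Set.Ioo (S.pos n j) (S.pos n j + S.w n)

/-- The measure on the space: Lebesgue measure restricted to `X`. -/
noncomputable def μ (S : RankOne) : Measure ℝ := volume.restrict S.X

/-- The intrinsic weight sequence `u n F = μ(F ∩ TⁿF) / μ(F)²`. -/
noncomputable def u (S : RankOne) (F : Set ℝ) (n : ℕ) : ℝ :=
  (S.μ (F ∩ (⇑S.T)^[n] '' F)).toReal / (S.μ F).toReal ^ 2

/-- `a n F = ∑_{k<n} u k F`. -/
noncomputable def a (S : RankOne) (F : Set ℝ) (n : ℕ) : ℝ :=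
  ∑ k ∈ Finset.range n, S.u F k

/-- `T` is normal if spacers are added above the rightmost subcolumn infinitely often. -/
def Normal (S : RankOne) : Prop := ∀ m, ∃ n, m ≤ n ∧ 0 < S.s n (S.r n - 1)

/-- `T` grows exponentially: `2 s_{n, r_n - 1} ≥ h_{n+1}` for every `n`. -/
def ExpGrowing (S : RankOne) : Prop := ∀ n, S.h (n + 1) ≤ 2 * S.s n (S.r n - 1)

/-- `T` has a bounded number of cuts: `sup r_n < ∞`. -/
def BoundedCuts (S : RankOne) : Prop := ∃ c, ∀ n, S.r n ≤ c

/-- `H n = {0} ∪ {∑_{k≤i} (h n + s n k) : 0 ≤ i < r n - 1}`. -/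
def Hset (S : RankOne) (n : ℕ) : Finset ℕ :=
  insert 0 ((Finset.range (S.r n - 1)).image fun i => ∑ k ∈ Finset.range (i + 1), (S.h n + S.s n k))

/-- The set of heights in column `C N` of the descendants of the level of height `p`
in column `C j`: `D(J, N) = p + H j ⊕ H (j+1) ⊕ ⋯ ⊕ H (N-1)`. -/
def desc (S : RankOne) (j p : ℕ) : ℕ → Finset ℕ
  | 0 => {p}
  | N + 1 => if N < j then {p} else desc S j p N + S.Hset N

/-- `M m`: the maximal height of a descendant of the unit interval `I` in column `C m`. -/
def M (S : RankOne) (m : ℕ) : ℕ := (S.desc 0 0 m).sup id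

/-- The ergodic sum `S_n(1_F)(x) = ∑_{k<n} 1_F(T^k x)`. -/
noncomputable def birkhoff (S : RankOne) (F : Set ℝ) (n : ℕ) (x : ℝ) : ℝ :=
  ∑ k ∈ Finset.range n, Set.indicator F (fun _ => (1 : ℝ)) ((⇑S.T)^[k] x)

/-- `T` is rationally weakly mixing on `F`. -/
def RWMOn (S : RankOne) (F : Set ℝ) : Prop :=
  MeasurableSet F ∧ 0 < S.μ F ∧ S.μ F ≠ ⊤ ∧
  ∀ A B : Set ℝ, MeasurableSet A → A ⊆ F → MeasurableSet B → B ⊆ F →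
    Tendsto (fun n => (S.a F n)⁻¹ *
      ∑ k ∈ Finset.range n,
        |(S.μ (A ∩ (⇑S.T)^[k] '' B)).toReal - (S.μ A).toReal * (S.μ B).toReal * S.u F k|)
      atTop (nhds 0)

/-- `T` is rationally weakly mixing. -/
def RWM (S : RankOne) : Prop := ∃ F, S.RWMOn F

/-- `T` is rationally ergodic: some set `F` of positive finite measure satisfies a
Renyi inequality. -/
def RatErgodic (S : RankOne) : Prop :=
  ∃ (F : Set ℝ) (c : ℝ), MeasurableSet F ∧ 0 < S.μ F ∧ S.μ F ≠ ⊤ ∧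
    ∀ n, ∫ x in F, (S.birkhoff F n x) ^ 2 ∂S.μ ≤ c * (∫ x in F, S.birkhoff F n x ∂S.μ) ^ 2

/-- `T` is spectrally weakly mixing: every bounded measurable eigenfunction is a.e. constant. -/
def SpecWM (S : RankOne) : Prop :=
  ∀ (f : ℝ → ℂ) (z : ℂ), Measurable f → (∃ C, ∀ᵐ x ∂S.μ, ‖f x‖ ≤ C) →
    (∀ᵐ x ∂S.μ, f (S.T x) = z * f x) → ∃ c : ℂ, ∀ᵐ x ∂S.μ, f x = c

/-- `T` is zero-type: `μ(A ∩ TⁿA) → 0` for all `A` of finite measure. -/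
def ZeroType (S : RankOne) : Prop :=
  ∀ A : Set ℝ, MeasurableSet A → S.μ A ≠ ⊤ →
    Tendsto (fun n => S.μ (A ∩ (⇑S.T)^[n] '' A)) atTop (nhds 0)

/-- The `i`-th nonzero element of `H n` (for `i < r n - 1`): `e n i = ∑_{k ≤ i} (h n + s n k)`. -/
def e (S : RankOne) (n i : ℕ) : ℕ := ∑ k ∈ Finset.range (i + 1), (S.h n + S.s n k)

/-- `T` is steep: listing the nonzero elements of `H 0`, then `H 1`, etc., as `t 1, t 2, …`,
each successive element is at least `4` times the previous one. -/
def Steep (S : RankOne) : Prop :=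
  (∀ n i, i + 2 < S.r n → 4 * S.e n i ≤ S.e n (i + 1)) ∧
  (∀ n, 4 * S.e n (S.r n - 2) ≤ S.e (n + 1) 0)

/-- `T` is almost steep. -/
def AlmostSteep (S : RankOne) : Prop :=
  ∀ n, 3 ≤ S.r n ∧ S.s n 0 = 0 ∧ S.s n 1 = 1 ∧
    ∀ i, 2 ≤ i → i ≤ S.r n - 1 →
      4 * (∑ k ∈ Finset.range i, (S.h n + S.s n k)) ≤ ∑ k ∈ Finset.range (i + 1), (S.h n + S.s n k)

/-- `A` is a finite union of levels of `T`. -/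
def FinUnionLevels (S : RankOne) (A : Set ℝ) : Prop :=
  ∃ q : Finset (ℕ × ℕ), (∀ v ∈ q, v.2 < S.h v.1) ∧ A = ⋃ v ∈ q, S.lvl v.1 v.2

end RankOne

/-!
Place above each subcolumn as many spacers as there are levels below them. The subcolumn offsets
then at least double, so a time `k` between `h n / 2` and `h (n + 1) / 2` determines which of the
`r n` subcolumns of column `n` can contain the points of an earlier column that return to it at
time `k`. Such returns have measure at most `1 / r n` times that of the column, and `r n → ∞` gives
zero type.

If moreover `h n` divides the numbers of spacers placed on column `n`, then `T` has the rotation of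
`ℤ / h n` as a factor, so two different levels of column `n` return to the first of them at disjoint
sets of times. A set `F` of positive measure meets two levels of some column in positive measure,
and rational weak mixing on `F` would make the return times of both parts agree on average.
-/

open scoped Topology

section Equidecomposition

variable {α : Type*}

open Classical in
lemma bijOn_piecewise {f g : α → α} {s s' t t' : Set α} (hf : BijOn f s t) (hg : BijOn g s' t')
    (hs : Disjoint s s') (ht : Disjoint t t') : BijOn (s.piecewise f g) (s ∪ s') (t ∪ t') := by
  have hf' : BijOn (s.piecewise f g) s t := hf.congr (piecewise_eqOn s f g).symm
  have hg' : BijOn (s.piecewise f g) s' t' :=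
    hg.congr ((piecewise_eqOn_compl s f g).symm.mono hs.subset_compl_left)
  refine hf'.union hg' ((injOn_union hs).2 ⟨hf'.injOn, hg'.injOn, fun x hx y hy hxy => ?_⟩)
  exact disjoint_left.1 ht (hf'.mapsTo hx) (hxy ▸ hg'.mapsTo hy)

lemma exists_bijOn_of_countable_infinite {s t : Set α} (hs : s.Countable) (hs' : s.Infinite)
    (ht : t.Countable) (ht' : t.Infinite) : ∃ f : α → α, BijOn f s t := by
  have := hs.to_subtype
  have := hs'.to_subtype
  have := ht.to_subtype
  have := ht'.to_subtype
  obtain ⟨e⟩ : Nonempty (s ≃ t) := nonempty_equiv_of_countable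
  have hval : ∀ x : s, Function.extend Subtype.val (fun x => (e x : α)) id x = e x :=
    Subtype.val_injective.extend_apply _ _
  refine ⟨Function.extend Subtype.val (fun x => (e x : α)) id, fun x hx => ?_,
    fun x hx y hy hxy => ?_, fun y hy => ?_⟩
  · exact (hval ⟨x, hx⟩).symm ▸ (e ⟨x, hx⟩).2
  · have heq : (e ⟨x, hx⟩ : α) = e ⟨y, hy⟩ := by rw [← hval, ← hval, hxy]
    exact congrArg Subtype.val (e.injective (Subtype.ext heq))
  · exact ⟨e.symm ⟨y, hy⟩, (e.symm ⟨y, hy⟩).2, by rw [hval, e.apply_symm_apply]⟩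

lemma exists_bijOn_of_biUnique {R : α → α → Prop} (hR : Relator.BiUnique R) :
    ∃ f : α → α, (∀ x y, R x y → f x = y) ∧ BijOn f {x | ∃ y, R x y} {y | ∃ x, R x y} := by
  classical
  obtain ⟨f, hfR⟩ : ∃ f : α → α, ∀ x y, R x y → f x = y := by
    refine ⟨fun x => if hx : ∃ y, R x y then hx.choose else x, fun x y hxy => ?_⟩
    have hx : ∃ y, R x y := ⟨y, hxy⟩
    exact (dif_pos hx).trans (hR.2 hx.choose_spec hxy)
  refine ⟨f, hfR, ?_, ?_, ?_⟩
  · rintro x ⟨y, hxy⟩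
    exact ⟨x, (hfR x y hxy).symm ▸ hxy⟩
  · rintro x ⟨y, hxy⟩ x' ⟨y', hxy'⟩ heq
    have hyy : y = y' := (hfR x y hxy).symm.trans (heq.trans (hfR x' y' hxy'))
    exact hR.1 hxy (hyy ▸ hxy')
  · rintro y ⟨x, hxy⟩
    exact ⟨x, ⟨y, hxy⟩, hfR x y hxy⟩

lemma exists_equiv_of_biUnique {R : α → α → Prop} (hR : Relator.BiUnique R) {X : Set α}
    (hdom : {x | ∃ y, R x y} ⊆ X) (hran : {y | ∃ x, R x y} ⊆ X)
    (hdom_count : (X \ {x | ∃ y, R x y}).Countable) (hdom_inf : (X \ {x | ∃ y, R x y}).Infinite)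
    (hran_count : (X \ {y | ∃ x, R x y}).Countable) (hran_inf : (X \ {y | ∃ x, R x y}).Infinite) :
    ∃ e : α ≃ α, (∀ x y, R x y → e x = y) ∧ BijOn e X X ∧ ∀ x ∉ X, e x = x := by
  classical
  obtain ⟨f, hfR, hf⟩ := exists_bijOn_of_biUnique hR
  obtain ⟨f', hf'⟩ := exists_bijOn_of_countable_infinite hdom_count hdom_inf hran_count hran_inf
  have hX := bijOn_piecewise hf hf' disjoint_sdiff_right disjoint_sdiff_right
  rw [union_sdiff_cancel hdom, union_sdiff_cancel hran] at hX
  have huniv := bijOn_piecewise hX (bijOn_id Xᶜ) disjoint_compl_right disjoint_compl_right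
  rw [union_compl_self] at huniv
  refine ⟨Equiv.ofBijective _ (bijOn_univ.1 huniv), fun x y hxy => ?_,
    hX.congr (piecewise_eqOn X _ _).symm, fun x hx => piecewise_eq_of_notMem _ _ _ hx⟩
  have hx : x ∈ {x | ∃ y, R x y} := ⟨y, hxy⟩
  exact (piecewise_eq_of_mem _ _ _ (hdom hx)).trans
    ((piecewise_eq_of_mem _ _ _ hx).trans (hfR x y hxy))

end Equidecomposition

section MeasureTheory

lemma measurePreserving_restrict_of_hasDerivAt_one {e : ℝ ≃ᵐ ℝ} {X : Set ℝ}
    (hX : MeasurableSet X) (he : BijOn e X X) {K : Set ℝ} (hK : K.Countable)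
    (hderiv : ∀ x ∈ X \ K, HasDerivAt e 1 x) :
    MeasurePreserving e (volume.restrict X) (volume.restrict X) := by
  refine ⟨e.measurable, Measure.ext fun A hA => ?_⟩
  have hpre : MeasurableSet (e ⁻¹' A ∩ X) := (e.measurable hA).inter hX
  have himage : volume (e '' ((e ⁻¹' A ∩ X) \ K)) = volume ((e ⁻¹' A ∩ X) \ K) := by
    simpa using lintegral_image_eq_lintegral_abs_deriv_mul (hpre.diff hK.measurableSet)
      (fun x hx => (hderiv x ⟨hx.1.2, hx.2⟩).hasDerivWithinAt) e.injective.injOn (fun _ => 1)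
  rw [Measure.map_apply e.measurable hA, Measure.restrict_apply (e.measurable hA),
    Measure.restrict_apply hA]
  calc volume (e ⁻¹' A ∩ X) = volume (e '' ((e ⁻¹' A ∩ X) \ K)) := by
        rw [himage, measure_sdiff_null (hK.measure_zero _)]
    _ = volume (A ∩ X) := by
        rw [image_sdiff e.injective, measure_sdiff_null ((hK.image e).measure_zero _),
          image_preimage_inter, he.image_eq]

variable {α : Type*} [MeasurableSpace α] {μ : Measure α} {T : α ≃ᵐ α}

lemma measure_inter_image_iterate (hT : MeasurePreserving T μ μ) (A B : Set α) (k : ℕ) :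
    μ (A ∩ T^[k] '' B) = μ (T^[k] ⁻¹' A ∩ B) := by
  have hinj : Function.Injective T^[k] := T.injective.iterate k
  have hemb : MeasurableEmbedding T^[k] := by
    induction k with
    | zero => exact MeasurableEmbedding.id
    | succ k ih => exact (ih (T.injective.iterate k)).comp T.measurableEmbedding
  rw [← (hT.iterate k).measure_preimage_emb hemb, preimage_inter, preimage_image_eq _ hinj]

lemma ae_forall_iterate (hT : MeasurePreserving T μ μ) {p : α → Prop} (hp : ∀ᵐ x ∂μ, p x) :
    ∀ᵐ x ∂μ, ∀ k, p (T^[k] x) :=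
  ae_all_iff.2 fun k => (hT.iterate k).quasiMeasurePreserving.ae hp

lemma tendsto_measure_inter_image_of_exhaustion (hT : MeasurePreserving T μ μ) {A : Set α}
    {E : ℕ → Set α} (hAE : Tendsto (fun m => μ (A \ E m)) atTop (𝓝 0))
    (hE : ∀ m, Tendsto (fun k => μ (E m ∩ T^[k] '' E m)) atTop (𝓝 0)) :
    Tendsto (fun k => μ (A ∩ T^[k] '' A)) atTop (𝓝 0) := by
  rw [ENNReal.tendsto_nhds_zero] at hAE ⊢
  intro ε hε
  have hε3 : 0 < ε / 3 := ENNReal.div_pos hε.ne' ENNReal.ofNat_ne_top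
  obtain ⟨m, hm⟩ := (hAE (ε / 3) hε3).exists
  filter_upwards [ENNReal.tendsto_nhds_zero.1 (hE m) (ε / 3) hε3] with k hk
  have hcover : A ∩ T^[k] '' A ⊆
      (A \ E m) ∪ (univ ∩ T^[k] '' (A \ E m)) ∪ (E m ∩ T^[k] '' E m) := by
    rintro _ ⟨hy, x, hx, rfl⟩
    by_cases hyE : T^[k] x ∈ E m
    · by_cases hxE : x ∈ E m
      · exact Or.inr ⟨hyE, x, hxE, rfl⟩
      · exact Or.inl (Or.inr ⟨mem_univ _, x, ⟨hx, hxE⟩, rfl⟩)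
    · exact Or.inl (Or.inl ⟨hy, hyE⟩)
  calc μ (A ∩ T^[k] '' A)
      ≤ μ (A \ E m) + μ (univ ∩ T^[k] '' (A \ E m)) + μ (E m ∩ T^[k] '' E m) := by
        refine (measure_mono hcover).trans ((measure_union_le _ _).trans ?_)
        gcongr
        exact measure_union_le _ _
    _ ≤ ε / 3 + ε / 3 + ε / 3 := by
        rw [measure_inter_image_iterate hT, preimage_univ, univ_inter]
        gcongr
    _ = ε := ENNReal.add_thirds ε

end MeasureTheory

lemma exists_mem_Ioo_of_mem_Ioo_mul {a w x : ℝ} {r : ℕ} (hw : 0 < w) (hx : x ∈ Ioo a (a + r * w))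
    (hcut : ∀ k : ℕ, x ≠ a + k * w) : ∃ k < r, x ∈ Ioo (a + k * w) (a + k * w + w) := by
  have hy : 0 ≤ (x - a) / w := div_nonneg (sub_nonneg.2 hx.1.le) hw.le
  have hlow := (le_div_iff₀ hw).1 (Nat.floor_le hy)
  have hupp := (div_lt_iff₀ hw).1 (Nat.lt_floor_add_one ((x - a) / w))
  refine ⟨⌊(x - a) / w⌋₊, (Nat.floor_lt hy).2 ((div_lt_iff₀ hw).2 (by linarith [hx.2])), ?_, ?_⟩
  · exact lt_of_le_of_ne (by linarith) (hcut _).symm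
  · linarith

/-! ### Combinatorics of cutting and stacking -/

/-- The combinatorial data of a cutting-and-stacking construction: column `n` has height `h n`, is
cut into `r n` subcolumns, and receives `s n k` spacers above its `k`-th subcolumn. -/
structure CuttingData where
  r : ℕ → ℕ
  s : ℕ → ℕ → ℕ
  h : ℕ → ℕ
  two_le_r : ∀ n, 2 ≤ r n
  h_zero : h 0 = 1
  h_succ : ∀ n, h (n + 1) = ∑ k ∈ Finset.range (r n), (h n + s n k)

namespace CuttingData

variable (D : CuttingData)

/-- The height in column `n + 1` of the bottom of the `k`-th subcolumn of column `n`; for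
`k = r n` this is the height of column `n + 1`. -/
def offset (n k : ℕ) : ℕ := ∑ i ∈ Finset.range k, (D.h n + D.s n i)

/-- The common width of the levels of column `n`. -/
noncomputable def width (n : ℕ) : ℝ := ∏ i ∈ Finset.range n, (D.r i : ℝ)⁻¹

/-- `D.IsCopy m n g` says that a copy of column `m` occupies the levels `g, …, g + h m - 1` of
column `n`. The set of such `g` is `H m ⊕ ⋯ ⊕ H (n - 1)` in the notation of descendants. -/
inductive IsCopy (m : ℕ) : ℕ → ℕ → Prop
  | refl : IsCopy m m 0
  | step {n g k : ℕ} (hg : IsCopy m n g) (hk : k < D.r n) : IsCopy m (n + 1) (D.offset n k + g)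

/-- Above each subcolumn there are at least as many spacers as levels below them in the new
column. -/
def SpacersDominate : Prop := ∀ n, ∀ k < D.r n, D.offset n k + D.h n ≤ D.s n k

/-- Every number of spacers used on column `n` is a multiple of the height of that column. -/
def HeightDvdSpacers : Prop := ∀ n, ∀ k < D.r n, D.h n ∣ D.s n k

variable {D} {m n i j k l g : ℕ}

lemma offset_zero : D.offset n 0 = 0 := Finset.sum_range_zero _

lemma offset_succ : D.offset n (k + 1) = D.offset n k + (D.h n + D.s n k) :=
  Finset.sum_range_succ _ _

lemma h_succ_eq_offset : D.h (n + 1) = D.offset n (D.r n) := D.h_succ n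

lemma offset_mono : Monotone (D.offset n) :=
  monotone_nat_of_le_succ fun k => by rw [offset_succ]; omega

lemma offset_add_h_le (hkl : k < l) : D.offset n k + D.h n ≤ D.offset n l := by
  have hle : D.offset n (k + 1) ≤ D.offset n l := offset_mono hkl
  rw [offset_succ] at hle
  omega

lemma offset_add_lt (hk : k < D.r n) (hj : j < D.h n) : D.offset n k + j < D.h (n + 1) := by
  have hle : D.offset n k + D.h n ≤ D.offset n (D.r n) := offset_add_h_le hk
  rw [h_succ_eq_offset]
  omega

lemma two_mul_h_le : 2 * D.h n ≤ D.h (n + 1) := by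
  have hone : D.offset n 0 + D.h n ≤ D.offset n 1 := offset_add_h_le one_pos
  have htwo : D.offset n 1 + D.h n ≤ D.offset n (D.r n) := offset_add_h_le (D.two_le_r n)
  rw [h_succ_eq_offset]
  omega

lemma h_pos : 0 < D.h n := by
  induction n with
  | zero => exact D.h_zero ▸ one_pos
  | succ n ih => have := D.two_mul_h_le (n := n); omega

lemma strictMono_h : StrictMono D.h :=
  strictMono_nat_of_lt_succ fun n => by
    have := D.two_mul_h_le (n := n)
    have := D.h_pos (n := n)
    omega

lemma eventually_exists_h_le_two_mul (N : ℕ) :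
    ∀ᶠ k in atTop, ∃ n ≥ N, D.h n ≤ 2 * k ∧ 2 * k < D.h (n + 1) := by
  filter_upwards [eventually_ge_atTop (D.h N)] with k hk
  have h_zero_le : D.h 0 ≤ D.h N := strictMono_h.monotone N.zero_le
  obtain ⟨n, hlow, hupp⟩ := strictMono_h.exists_between_of_tendsto_atTop
    strictMono_h.tendsto_atTop (x := 2 * k + 1) (by omega : D.h 0 < 2 * k + 1)
  have hNn : N < n + 1 := strictMono_h.lt_iff_lt.1 (by omega : D.h N < D.h (n + 1))
  exact ⟨n, by omega, by omega, hupp⟩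

lemma r_pos : (0 : ℝ) < D.r n := Nat.cast_pos.2 (by have := D.two_le_r n; omega)

lemma width_pos : 0 < D.width n := Finset.prod_pos fun _ _ => inv_pos.2 r_pos

lemma width_succ : D.width (n + 1) = D.width n / D.r n := Finset.prod_range_succ _ _

lemma r_mul_width_succ : D.r n * D.width (n + 1) = D.width n := by
  rw [width_succ, mul_div_cancel₀ _ r_pos.ne']

lemma mul_width_succ_add_le (hk : k < D.r n) :
    k * D.width (n + 1) + D.width (n + 1) ≤ D.width n := by
  have hkr : (k : ℝ) + 1 ≤ D.r n := mod_cast hk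
  calc k * D.width (n + 1) + D.width (n + 1) = (k + 1) * D.width (n + 1) := by ring
    _ ≤ D.r n * D.width (n + 1) := mul_le_mul_of_nonneg_right hkr width_pos.le
    _ = D.width n := r_mul_width_succ

lemma tendsto_width : Tendsto D.width atTop (𝓝 0) := by
  refine squeeze_zero (fun n => width_pos.le) (fun n => ?_)
    (tendsto_pow_atTop_nhds_zero_of_lt_one (r := (2 : ℝ)⁻¹) (by norm_num) (by norm_num))
  have hinv : ∀ i ∈ Finset.range n, (D.r i : ℝ)⁻¹ ≤ 2⁻¹ := fun i _ =>
    inv_anti₀ two_pos (mod_cast D.two_le_r i)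
  simpa [width] using Finset.prod_le_prod (fun i _ => (inv_pos.2 r_pos).le) hinv

namespace IsCopy

lemma le (hg : D.IsCopy m n g) : m ≤ n := by
  induction hg with
  | refl => exact le_rfl
  | step _ _ ih => exact ih.trans (Nat.le_succ _)

lemma add_lt (hg : D.IsCopy m n g) (hi : i < D.h m) : g + i < D.h n := by
  induction hg with
  | refl => simpa using hi
  | step _ hk ih => rw [add_assoc]; exact offset_add_lt hk ih

end IsCopy

namespace SpacersDominate

lemma two_mul_offset_add_h_le (hD : D.SpacersDominate) (hk : k < D.r n) :
    2 * (D.offset n k + D.h n) ≤ D.offset n (k + 1) := by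
  have := hD n k hk
  rw [offset_succ]
  omega

lemma two_mul_r_mul_h_le (hD : D.SpacersDominate) : 2 * D.h n * D.r n ≤ D.h (n + 1) := by
  have hle : (Finset.range (D.r n)).card • (2 * D.h n) ≤ D.h (n + 1) := by
    rw [D.h_succ]
    refine Finset.card_nsmul_le_sum _ _ _ fun k hk => ?_
    have := hD n k (Finset.mem_range.1 hk)
    omega
  rwa [Finset.card_range, smul_eq_mul, mul_comm] at hle

lemma two_mul_isCopy_add_lt (hD : D.SpacersDominate) (hmn : m < n) (hg : D.IsCopy m n g)
    (hi : i < D.h m) : 2 * (g + i) < D.h n := by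
  cases hg with
  | refl => exact absurd hmn (lt_irrefl _)
  | @step p g k hg hk =>
    have hgi := hg.add_lt hi
    have hdouble := hD.two_mul_offset_add_h_le hk
    have hmono : D.offset p (k + 1) ≤ D.offset p (D.r p) := offset_mono hk
    rw [h_succ_eq_offset]
    omega

lemma two_pow_le_h_mul_width (hD : D.SpacersDominate) : 2 ^ n ≤ D.h n * D.width n := by
  induction n with
  | zero => simp [width, D.h_zero]
  | succ n ih =>
    have hle : (2 * D.h n * D.r n : ℝ) ≤ D.h (n + 1) := mod_cast hD.two_mul_r_mul_h_le
    calc (2 : ℝ) ^ (n + 1) ≤ 2 * (D.h n * D.width n) := by rw [pow_succ']; gcongr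
      _ = 2 * D.h n * D.r n * D.width (n + 1) := by rw [← D.r_mul_width_succ]; ring
      _ ≤ D.h (n + 1) * D.width (n + 1) := by gcongr; exact width_pos.le

variable {i' p p' a a' b b' : ℕ}

lemma not_lt_of_offset_add_eq (hD : D.SpacersDominate) (hi' : i' < D.r n) (hk : D.h n ≤ 2 * k)
    (ha : 2 * a < D.h n) (ha' : 2 * a' < D.h n) (hb' : 2 * b' < D.h n)
    (hi : D.offset n i + a + k = D.offset n i' + a')
    (hp : D.offset n p + b + k = D.offset n p' + b') : ¬ p' < i' := by
  intro hlt
  obtain ⟨c, rfl⟩ := Nat.exists_eq_add_one_of_ne_zero (Nat.ne_zero_of_lt hlt)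
  have hdouble := hD.two_mul_offset_add_h_le (Nat.lt_of_succ_lt hi')
  have hpc : D.offset n p' ≤ D.offset n c := offset_mono (Nat.lt_succ_iff.1 hlt)
  have hic : D.offset n i ≤ D.offset n c := by
    refine offset_mono (Nat.lt_succ_iff.1 ?_)
    by_contra hci
    have : D.offset n (c + 1) ≤ D.offset n i := offset_mono (not_lt.1 hci)
    omega
  omega

/-- The offsets at least double at each step, so the offset differences are separated by more
than the height of column `n`, and the larger offset of a pair can be read off its difference. -/
lemma eq_of_offset_add_eq (hD : D.SpacersDominate) (hi' : i' < D.r n) (hp' : p' < D.r n)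
    (hk : D.h n ≤ 2 * k) (ha : 2 * a < D.h n) (ha' : 2 * a' < D.h n) (hb : 2 * b < D.h n)
    (hb' : 2 * b' < D.h n) (hi : D.offset n i + a + k = D.offset n i' + a')
    (hp : D.offset n p + b + k = D.offset n p' + b') : i' = p' :=
  le_antisymm (not_lt.1 (hD.not_lt_of_offset_add_eq hi' hk ha ha' hb' hi hp))
    (not_lt.1 (hD.not_lt_of_offset_add_eq hp' hk hb hb' ha' hp hi))

end SpacersDominate

namespace HeightDvdSpacers

lemma dvd_offset (hD : D.HeightDvdSpacers) (hk : k ≤ D.r n) : D.h n ∣ D.offset n k :=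
  Finset.dvd_sum fun i hi =>
    dvd_add dvd_rfl (hD n i ((Finset.mem_range.1 hi).trans_le hk))

lemma dvd_h (hD : D.HeightDvdSpacers) (hmn : m ≤ n) : D.h m ∣ D.h n := by
  induction n, hmn using Nat.le_induction with
  | base => exact dvd_rfl
  | succ n _ ih => exact ih.trans (h_succ_eq_offset ▸ hD.dvd_offset le_rfl)

lemma dvd_of_isCopy (hD : D.HeightDvdSpacers) (hg : D.IsCopy m n g) : D.h m ∣ g := by
  induction hg with
  | refl => exact dvd_zero _
  | step hg hk ih => exact dvd_add ((hD.dvd_h hg.le).trans (hD.dvd_offset hk.le)) ih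

end HeightDvdSpacers

end CuttingData

/-! ### Columns of intervals and the map they define -/

/-- A realization of cutting data by intervals of the real line: the `j`-th level of column `n` is
the open interval of length `width n` with left endpoint `pos n j`. -/
structure Columns extends CuttingData where
  pos : ℕ → ℕ → ℝ
  pos_zero : pos 0 0 = 0
  disjoint_Ioo : ∀ n, ∀ j < h n, ∀ j' < h n, j ≠ j' →
    Disjoint (Ioo (pos n j) (pos n j + toCuttingData.width n))
      (Ioo (pos n j') (pos n j' + toCuttingData.width n))
  pos_offset_add : ∀ n, ∀ j < h n, ∀ k < r n,
    pos (n + 1) (toCuttingData.offset n k + j) = pos n j + k * toCuttingData.width (n + 1)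

namespace Columns

open CuttingData

variable (C : Columns)

/-- The level of height `j` in column `n`. -/
def lvl (n j : ℕ) : Set ℝ := Ioo (C.pos n j) (C.pos n j + C.width n)

/-- The union of the levels of column `n`. -/
def column (n : ℕ) : Set ℝ := ⋃ j < C.h n, C.lvl n j

/-- The space exhausted by the columns. -/
def space : Set ℝ := ⋃ n, C.column n

/-- The points at which levels are cut, together with the endpoints of the levels. Column `n` is
contained in column `n + 1` only up to such points. -/
def cutPoints : Set ℝ := range fun p : ℕ × ℕ × ℕ => C.pos p.1 p.2.1 + p.2.2 * C.width (p.1 + 1)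

/-- The increasing part of the columns: column `n` without the cut points. -/
def core (n : ℕ) : Set ℝ := C.column n \ C.cutPoints

/-- The translation distance from the `j`-th level of column `n` to the level above it. -/
def gap (n j : ℕ) : ℝ := C.pos n (j + 1) - C.pos n j

/-- The graph of the map that every column defines on its levels other than the top one. -/
def Above (x y : ℝ) : Prop := ∃ n j, j + 1 < C.h n ∧ x ∈ C.lvl n j ∧ y = x + C.gap n j

variable {C} {m n i j k g t : ℕ} {x y : ℝ}

lemma isOpen_lvl : IsOpen (C.lvl n j) := isOpen_Ioo

lemma isOpen_column : IsOpen (C.column n) := isOpen_biUnion fun _ _ => isOpen_lvl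

lemma isOpen_space : IsOpen C.space := isOpen_iUnion fun _ => isOpen_column

lemma lvl_subset_column (hj : j < C.h n) : C.lvl n j ⊆ C.column n :=
  subset_biUnion_of_mem (u := fun j => C.lvl n j) hj

lemma lvl_subset_space (hj : j < C.h n) : C.lvl n j ⊆ C.space :=
  (lvl_subset_column hj).trans (subset_iUnion C.column n)

lemma mem_column : x ∈ C.column n ↔ ∃ j < C.h n, x ∈ C.lvl n j := by
  simp only [column, mem_iUnion, exists_prop]

lemma countable_cutPoints : C.cutPoints.Countable := countable_range _

lemma eq_of_mem_lvl (hi : i < C.h n) (hj : j < C.h n) (hxi : x ∈ C.lvl n i)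
    (hxj : x ∈ C.lvl n j) : i = j := by
  by_contra hij
  exact disjoint_left.1 (C.disjoint_Ioo n i hi j hj hij) hxi hxj

lemma add_gap_mem_lvl (hx : x ∈ C.lvl n j) : x + C.gap n j ∈ C.lvl n (j + 1) := by
  have := hx.1
  have := hx.2
  constructor <;> unfold gap <;> linarith

lemma sub_gap_mem_lvl (hx : x ∈ C.lvl n (j + 1)) : x - C.gap n j ∈ C.lvl n j := by
  have := hx.1
  have := hx.2
  constructor <;> unfold gap <;> linarith

lemma lvl_offset_add_subset (hj : j < C.h n) (hk : k < C.r n) :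
    C.lvl (n + 1) (C.offset n k + j) ⊆ C.lvl n j := by
  have hpos := C.pos_offset_add n j hj k hk
  have hle := C.mul_width_succ_add_le hk
  have hnonneg : 0 ≤ k * C.width (n + 1) := mul_nonneg k.cast_nonneg width_pos.le
  exact Ioo_subset_Ioo (by linarith) (by linarith)

lemma exists_mem_lvl_offset_add (hj : j < C.h n) (hx : x ∈ C.lvl n j) (hcut : x ∉ C.cutPoints) :
    ∃ k < C.r n, x ∈ C.lvl (n + 1) (C.offset n k + j) := by
  rw [lvl, ← r_mul_width_succ] at hx
  obtain ⟨k, hk, hxk⟩ := exists_mem_Ioo_of_mem_Ioo_mul width_pos hx fun k hk =>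
    hcut ⟨(n, j, k), hk.symm⟩
  exact ⟨k, hk, by rwa [lvl, C.pos_offset_add n j hj k hk]⟩

lemma exists_pos_add_eq_of_isCopy (hg : C.IsCopy m n g) :
    ∃ δ, ∀ i < C.h m, C.pos n (g + i) = C.pos m i + δ := by
  induction hg with
  | refl => exact ⟨0, fun i _ => by rw [zero_add, add_zero]⟩
  | @step n g k hg hk ih =>
    obtain ⟨δ, hδ⟩ := ih
    refine ⟨δ + k * C.width (n + 1), fun i hi => ?_⟩
    rw [add_assoc, C.pos_offset_add n (g + i) (hg.add_lt hi) k hk, hδ i hi, add_assoc]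

lemma gap_eq_of_isCopy (hg : C.IsCopy m n g) (hi : i + 1 < C.h m) :
    C.gap n (g + i) = C.gap m i := by
  obtain ⟨δ, hδ⟩ := exists_pos_add_eq_of_isCopy hg
  rw [gap, gap, add_assoc, hδ (i + 1) hi, hδ i (Nat.lt_of_succ_lt hi), add_sub_add_right_eq_sub]

lemma lvl_subset_of_isCopy (hg : C.IsCopy m n g) (hi : i < C.h m) :
    C.lvl n (g + i) ⊆ C.lvl m i := by
  induction hg with
  | refl => rw [zero_add]
  | step hg hk ih =>
    rw [add_assoc]
    exact (lvl_offset_add_subset (hg.add_lt hi) hk).trans ih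

lemma exists_isCopy_of_mem_lvl (hmn : m ≤ n) (hi : i < C.h m) (hx : x ∈ C.lvl m i)
    (hcut : x ∉ C.cutPoints) : ∃ g, C.IsCopy m n g ∧ x ∈ C.lvl n (g + i) := by
  induction n, hmn using Nat.le_induction with
  | base => exact ⟨0, .refl, by rwa [zero_add]⟩
  | succ n _ ih =>
    obtain ⟨g, hg, hxg⟩ := ih
    obtain ⟨k, hk, hxk⟩ := exists_mem_lvl_offset_add (hg.add_lt hi) hxg hcut
    exact ⟨C.offset n k + g, hg.step hk, by rwa [add_assoc]⟩

lemma monotone_core : Monotone C.core := by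
  rintro m n hmn x ⟨hx, hcut⟩
  obtain ⟨i, hi, hxi⟩ := mem_column.1 hx
  obtain ⟨g, hg, hxg⟩ := exists_isCopy_of_mem_lvl hmn hi hxi hcut
  exact ⟨lvl_subset_column (hg.add_lt hi) hxg, hcut⟩

/-- The intersection is open, so it contains a point which is not a cut point. -/
lemma exists_isCopy_of_inter_nonempty (hmn : m ≤ n) (hi : i < C.h m) (ht : t < C.h n)
    (hne : (C.lvl m i ∩ C.lvl n t).Nonempty) : ∃ g, C.IsCopy m n g ∧ g + i = t := by
  obtain ⟨x, ⟨hxi, hxt⟩, hcut⟩ :=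
    (countable_cutPoints.dense_compl ℝ).inter_open_nonempty _ (isOpen_lvl.inter isOpen_lvl) hne
  obtain ⟨g, hg, hxg⟩ := exists_isCopy_of_mem_lvl hmn hi hxi hcut
  exact ⟨g, hg, eq_of_mem_lvl (hg.add_lt hi) ht hxg hxt⟩

lemma gap_eq_of_mem_lvl (hi : i + 1 < C.h m) (hj : j + 1 < C.h n) (hxi : x ∈ C.lvl m i)
    (hxj : x ∈ C.lvl n j) : C.gap m i = C.gap n j := by
  wlog hmn : m ≤ n generalizing m n i j
  · exact (this hj hi hxj hxi (le_of_not_ge hmn)).symm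
  obtain ⟨g, hg, rfl⟩ := exists_isCopy_of_inter_nonempty hmn (Nat.lt_of_succ_lt hi)
    (Nat.lt_of_succ_lt hj) ⟨x, hxi, hxj⟩
  exact (gap_eq_of_isCopy hg hi).symm

lemma gap_eq_of_mem_lvl_succ (hi : i + 1 < C.h m) (hj : j + 1 < C.h n)
    (hxi : x ∈ C.lvl m (i + 1)) (hxj : x ∈ C.lvl n (j + 1)) : C.gap m i = C.gap n j := by
  wlog hmn : m ≤ n generalizing m n i j
  · exact (this hj hi hxj hxi (le_of_not_ge hmn)).symm
  obtain ⟨g, hg, hgj⟩ := exists_isCopy_of_inter_nonempty hmn hi hj ⟨x, hxi, hxj⟩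
  obtain rfl : g + i = j := Nat.succ_injective hgj
  exact (gap_eq_of_isCopy hg hi).symm

lemma biUnique_above : Relator.BiUnique C.Above := by
  refine ⟨?_, ?_⟩
  · rintro x x' y ⟨m, i, hi, hx, rfl⟩ ⟨n, j, hj, hx', heq⟩
    have hgap := gap_eq_of_mem_lvl_succ hi hj (add_gap_mem_lvl hx)
      (heq ▸ add_gap_mem_lvl hx')
    rwa [hgap, add_left_inj] at heq
  · rintro x y y' ⟨m, i, hi, hx, rfl⟩ ⟨n, j, hj, hx', rfl⟩
    rw [gap_eq_of_mem_lvl hi hj hx hx']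

lemma exists_above_iff_mem_lvl : (∃ y, C.Above x y) ↔ ∃ n j, j + 1 < C.h n ∧ x ∈ C.lvl n j :=
  ⟨fun ⟨_, n, j, hj, hx, _⟩ => ⟨n, j, hj, hx⟩, fun ⟨n, j, hj, hx⟩ => ⟨_, n, j, hj, hx, rfl⟩⟩

lemma exists_above_iff_mem_lvl_succ :
    (∃ x, C.Above x y) ↔ ∃ n j, j + 1 < C.h n ∧ y ∈ C.lvl n (j + 1) := by
  constructor
  · rintro ⟨x, n, j, hj, hx, rfl⟩
    exact ⟨n, j, hj, add_gap_mem_lvl hx⟩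
  · rintro ⟨n, j, hj, hy⟩
    exact ⟨y - C.gap n j, n, j, hj, sub_gap_mem_lvl hy, (sub_add_cancel _ _).symm⟩

lemma add_width_notMem_column (hnm : n ≤ m) (hj : j < C.h n) :
    C.pos n j + C.width n ∉ C.column m := by
  rw [mem_column]
  rintro ⟨i, hi, hx⟩
  have hclosure : C.pos n j + C.width n ∈ closure (C.lvl n j) := by
    have hlt : C.pos n j < C.pos n j + C.width n := lt_add_of_pos_right _ width_pos
    rw [lvl, closure_Ioo hlt.ne]
    exact right_mem_Icc.2 hlt.le
  have hne : (C.lvl n j ∩ C.lvl m i).Nonempty :=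
    inter_comm _ _ ▸ mem_closure_iff.1 hclosure _ isOpen_lvl hx
  obtain ⟨g, hg, rfl⟩ := exists_isCopy_of_inter_nonempty hnm hj hi hne
  exact lt_irrefl _ (lvl_subset_of_isCopy hg hj hx).2

variable (C) in
/-- The points of the space lying in no level of column `n` other than the `J n`-th, for all `n`.
For `J n = 0` and `J n = h n - 1` these are the points where the columns define no preimage, and no
image, respectively. -/
def confinedTo (J : ℕ → ℕ) : Set ℝ :=
  {x ∈ C.space | ∀ n, ∀ j < C.h n, x ∈ C.lvl n j → j = J n}

lemma countable_confinedTo (J : ℕ → ℕ) : (C.confinedTo J).Countable := by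
  have hmem : ∀ x ∈ C.confinedTo J \ C.cutPoints, ∀ᶠ n in atTop, x ∈ C.lvl n (J n) := by
    rintro x ⟨⟨hx, hJ⟩, hcut⟩
    obtain ⟨m, hm⟩ := mem_iUnion.1 hx
    filter_upwards [eventually_ge_atTop m] with n hn
    obtain ⟨j, hj, hxj⟩ := mem_column.1 (monotone_core hn ⟨hm, hcut⟩).1
    exact hJ n j hj hxj ▸ hxj
  have hsub : (C.confinedTo J \ C.cutPoints).Subsingleton := by
    intro x hx y hy
    refine eq_of_abs_sub_nonpos (ge_of_tendsto C.tendsto_width ?_)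
    filter_upwards [hmem x hx, hmem y hy] with n hxn hyn
    exact abs_sub_le_iff.2 ⟨by linarith [hxn.2, hyn.1], by linarith [hyn.2, hxn.1]⟩
  exact (hsub.countable.union countable_cutPoints).mono (subset_sdiff_union _ _)

lemma infinite_confinedTo {J : ℕ → ℕ} (hJ : ∀ n, J n < C.h n)
    (hcopy : ∀ m n g j, C.IsCopy m n g → j < C.h m → g + j = J n → j = J m) :
    (C.confinedTo J).Infinite := by
  let p : ℕ → ℝ := fun n => C.pos n (J n) + C.width (n + 1)
  have hmem : ∀ n, p n ∈ C.lvl n (J n) := fun n => by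
    have hlt := C.mul_width_succ_add_le (k := 1) (n := n) (C.two_le_r n)
    have := C.width_pos (n := n + 1)
    constructor <;> simp only [p] <;> push_cast at hlt <;> linarith
  have hnotMem : ∀ n m, n < m → p n ∉ C.column m := fun n m hnm => by
    have hpos : C.pos (n + 1) (J n) = C.pos n (J n) := by
      simpa [offset_zero] using C.pos_offset_add n (J n) (hJ n) 0 (by have := C.two_le_r n; omega)
    simpa only [p, ← hpos] using
      add_width_notMem_column hnm ((hJ n).trans (strictMono_h n.lt_succ_self))
  have hinj : Function.Injective p := .of_lt_imp_ne fun n m hnm heq =>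
    hnotMem n m hnm (heq ▸ lvl_subset_column (hJ m) (hmem m))
  refine (infinite_range_of_injective hinj).mono ?_
  rintro _ ⟨n, rfl⟩
  refine ⟨lvl_subset_space (hJ n) (hmem n), fun m j hj hx => ?_⟩
  have hmn : m ≤ n := not_lt.1 fun hnm => hnotMem n m hnm (lvl_subset_column hj hx)
  obtain ⟨g, hg, hgj⟩ := exists_isCopy_of_inter_nonempty hmn hj (hJ n) ⟨_, hx, hmem n⟩
  exact hcopy m n g j hg hj hgj

lemma space_sdiff_domain_above :
    C.space \ {x | ∃ y, C.Above x y} = C.confinedTo fun n => C.h n - 1 := by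
  ext x
  simp only [Set.mem_sdiff, mem_ofPred_eq, exists_above_iff_mem_lvl, confinedTo,
    and_congr_right_iff]
  refine fun _ => ⟨fun hx n j hj hxj => ?_, fun hx ⟨n, j, hj, hxj⟩ => ?_⟩
  · by_contra hne
    exact hx ⟨n, j, by omega, hxj⟩
  · have := hx n j (by omega) hxj
    omega

lemma space_sdiff_range_above :
    C.space \ {y | ∃ x, C.Above x y} = C.confinedTo fun _ => 0 := by
  ext y
  simp only [Set.mem_sdiff, mem_ofPred_eq, exists_above_iff_mem_lvl_succ, confinedTo,
    and_congr_right_iff]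
  refine fun _ => ⟨fun hy n j hj hyj => ?_, fun hy ⟨n, j, hj, hyj⟩ => ?_⟩
  · by_contra hne
    obtain ⟨i, rfl⟩ := Nat.exists_eq_add_one_of_ne_zero hne
    exact hy ⟨n, i, hj, hyj⟩
  · exact Nat.succ_ne_zero j (hy n (j + 1) hj hyj)

lemma countable_space_sdiff_domain_above : (C.space \ {x | ∃ y, C.Above x y}).Countable :=
  space_sdiff_domain_above ▸ countable_confinedTo _

variable (C) in
lemma exists_equiv_extending_above : ∃ e : ℝ ≃ ℝ,
    (∀ x y, C.Above x y → e x = y) ∧ BijOn e C.space C.space ∧ ∀ x ∉ C.space, e x = x := by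
  refine exists_equiv_of_biUnique biUnique_above ?_ ?_ countable_space_sdiff_domain_above ?_ ?_ ?_
  · intro x hx
    obtain ⟨n, j, hj, hxj⟩ := exists_above_iff_mem_lvl.1 hx
    exact lvl_subset_space (Nat.lt_of_succ_lt hj) hxj
  · intro y hy
    obtain ⟨n, j, hj, hyj⟩ := exists_above_iff_mem_lvl_succ.1 hy
    exact lvl_subset_space hj hyj
  · rw [space_sdiff_domain_above]
    refine infinite_confinedTo (fun n => Nat.sub_lt h_pos one_pos) fun m n g j hg hj hgj => ?_
    have := hg.add_lt (Nat.sub_lt h_pos one_pos)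
    omega
  · exact space_sdiff_range_above ▸ countable_confinedTo _
  · rw [space_sdiff_range_above]
    exact infinite_confinedTo (fun n => h_pos) fun m n g j _ _ hgj => (Nat.add_eq_zero_iff.1 hgj).2

lemma hasDerivAt_of_extends_above {e : ℝ → ℝ} (he : ∀ x y, C.Above x y → e x = y)
    (hx : ∃ y, C.Above x y) : HasDerivAt e 1 x := by
  obtain ⟨n, j, hj, hxj⟩ := exists_above_iff_mem_lvl.1 hx
  refine ((hasDerivAt_id x).add_const (C.gap n j)).congr_of_eventuallyEq ?_
  filter_upwards [isOpen_lvl.mem_nhds hxj] with z hz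
  exact he z _ ⟨n, j, hj, hz, rfl⟩

lemma measurable_of_extends_above {e : ℝ → ℝ} (he : ∀ x y, C.Above x y → e x = y)
    (hid : ∀ x ∉ C.space, e x = x) : Measurable e := by
  classical
  have hcont : ContinuousOn e {x | ∃ y, C.Above x y} := fun x hx =>
    (hasDerivAt_of_extends_above he hx).continuousAt.continuousWithinAt
  have hopen : IsOpen {x | ∃ y, C.Above x y} := by
    have heq : {x | ∃ y, C.Above x y} = ⋃ n, ⋃ j, ⋃ _ : j + 1 < C.h n, C.lvl n j := by
      ext x
      simp only [mem_ofPred_eq, exists_above_iff_mem_lvl, mem_iUnion, exists_prop]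
    rw [heq]
    exact isOpen_iUnion fun _ => isOpen_iUnion fun _ => isOpen_iUnion fun _ => isOpen_lvl
  refine (hcont.measurable_piecewise continuousOn_id hopen.measurableSet).measurable_of_countable_ne
    (C.countable_space_sdiff_domain_above.mono fun x hx => ?_)
  have hxdom : x ∉ {x | ∃ y, C.Above x y} := fun hxdom =>
    hx (piecewise_eq_of_mem _ _ _ hxdom)
  refine ⟨by_contra fun hxspace => hx ?_, hxdom⟩
  rw [piecewise_eq_of_notMem _ _ _ hxdom, hid x hxspace, id]

variable (C) in
lemma exists_measurableEquiv_extending_above : ∃ T : ℝ ≃ᵐ ℝ,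
    (∀ x y, C.Above x y → T x = y) ∧ BijOn T C.space C.space := by
  obtain ⟨e, he, hbij, hid⟩ := C.exists_equiv_extending_above
  have hmeas := measurable_of_extends_above he hid
  refine ⟨⟨e, hmeas, fun A hA => ?_⟩, he, hbij⟩
  rw [← e.image_eq_preimage_symm]
  exact (hmeas.measurableEmbedding e.injective).measurableSet_image.2 hA

end Columns

namespace RankOne

/-- The combinatorial data of a rank-one transformation. -/
def cuttingData (S : RankOne) : CuttingData where
  r := S.r
  s := S.s
  h := S.h
  two_le_r := S.hr
  h_zero := S.h0
  h_succ := S.hrec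

end RankOne

lemma Columns.exists_rankOne (C : Columns) : ∃ S : RankOne, S.cuttingData = C.toCuttingData := by
  obtain ⟨T, hT, hbij⟩ := C.exists_measurableEquiv_extending_above
  have hpres : MeasurePreserving T (volume.restrict C.space) (volume.restrict C.space) :=
    measurePreserving_restrict_of_hasDerivAt_one isOpen_space.measurableSet hbij
      countable_space_sdiff_domain_above fun x hx =>
        hasDerivAt_of_extends_above hT (not_not.1 fun hdom => hx.2 ⟨hx.1, hdom⟩)
  exact ⟨{
    X := C.space
    T := T
    r := C.r
    s := C.s
    h := C.h
    w := C.width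
    pos := C.pos
    hr := C.two_le_r
    h0 := C.h_zero
    w0 := Finset.prod_range_zero _
    pos0 := C.pos_zero
    hrec := C.h_succ
    wrec := fun _ => CuttingData.width_succ
    hX := rfl
    disj := C.disjoint_Ioo
    stack := C.pos_offset_add
    Tmap := fun n j hj x hx => hT x _ ⟨n, j, hj, hx, rfl⟩
    Tbij := hbij
    Tpres := hpres }, rfl⟩

/-! ### Realization of cutting data by intervals -/

lemma disjoint_Ioo_add_mul {a w : ℝ} (hw : 0 ≤ w) {k l : ℕ} (hkl : k ≠ l) :
    Disjoint (Ioo (a + k * w) (a + k * w + w)) (Ioo (a + l * w) (a + l * w + w)) := by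
  wlog hlt : k < l generalizing k l
  · exact (this hkl.symm (lt_of_le_of_ne (not_lt.1 hlt) hkl.symm)).symm
  have hle : (k : ℝ) + 1 ≤ l := mod_cast hlt
  have hmul : (k + 1) * w ≤ l * w := mul_le_mul_of_nonneg_right hle hw
  exact Ioo_disjoint_Ioo.2 ((min_le_left _ _).trans (le_max_of_le_right (by linarith)))

namespace CuttingData

variable (D : CuttingData)

/-- The subcolumn of column `n` which is the last to start at or below height `t` of column
`n + 1`. -/
def subcolumnIndex (n t : ℕ) : ℕ := Nat.findGreatest (fun k => D.offset n k ≤ t) (D.r n - 1)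

/-- The right end of the part of the line occupied by column `n` when the spacers of each stage are
placed next to each other, to the right of all earlier levels. -/
noncomputable def rightEnd (n : ℕ) : ℝ := ∑ i ∈ Finset.range (n + 1), D.h i * D.width i

/-- Left endpoints of levels realizing the cutting data: a spacer at height `t` of column `n + 1`
is placed `t` steps to the right of `D.rightEnd n`. -/
noncomputable def leftEnd : ℕ → ℕ → ℝ
  | 0, _ => 0
  | n + 1, t =>
    if t - D.offset n (D.subcolumnIndex n t) < D.h n then
      leftEnd n (t - D.offset n (D.subcolumnIndex n t)) + D.subcolumnIndex n t * D.width (n + 1)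
    else D.rightEnd n + t * D.width (n + 1)

variable {D} {n j k t : ℕ}

lemma subcolumnIndex_lt : D.subcolumnIndex n t < D.r n := by
  have hle : D.subcolumnIndex n t ≤ D.r n - 1 := Nat.findGreatest_le _
  have := D.two_le_r n
  omega

lemma offset_subcolumnIndex_le : D.offset n (D.subcolumnIndex n t) ≤ t :=
  Nat.findGreatest_spec (P := fun k => D.offset n k ≤ t) (Nat.zero_le _)
    (offset_zero.trans_le (Nat.zero_le t))

lemma subcolumnIndex_offset_add (hk : k < D.r n) (hj : j < D.h n) :
    D.subcolumnIndex n (D.offset n k + j) = k := by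
  refine Nat.findGreatest_eq_iff.2 ⟨Nat.le_sub_one_of_lt hk, fun _ => Nat.le_add_right _ _,
    fun l hkl _ hle => ?_⟩
  have := D.offset_add_h_le (n := n) hkl
  omega

lemma leftEnd_offset_add (hj : j < D.h n) (hk : k < D.r n) :
    D.leftEnd (n + 1) (D.offset n k + j) = D.leftEnd n j + k * D.width (n + 1) := by
  rw [leftEnd, subcolumnIndex_offset_add hk hj, Nat.add_sub_cancel_left, if_pos hj]

lemma leftEnd_succ_cases (n t : ℕ) :
    (∃ j < D.h n, ∃ k < D.r n, t = D.offset n k + j ∧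
      D.leftEnd (n + 1) t = D.leftEnd n j + k * D.width (n + 1)) ∨
    D.leftEnd (n + 1) t = D.rightEnd n + t * D.width (n + 1) := by
  by_cases hlt : t - D.offset n (D.subcolumnIndex n t) < D.h n
  · exact Or.inl ⟨_, hlt, _, subcolumnIndex_lt,
      (Nat.add_sub_of_le offset_subcolumnIndex_le).symm, by rw [leftEnd, if_pos hlt]⟩
  · exact Or.inr (by rw [leftEnd, if_neg hlt])

lemma rightEnd_succ : D.rightEnd (n + 1) = D.rightEnd n + D.h (n + 1) * D.width (n + 1) :=
  Finset.sum_range_succ _ _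

lemma leftEnd_add_width_le (ht : t < D.h n) : D.leftEnd n t + D.width n ≤ D.rightEnd n := by
  induction n generalizing t with
  | zero => simp [leftEnd, rightEnd, D.h_zero]
  | succ n ih =>
    have hwidth := D.width_pos (n := n + 1)
    rw [rightEnd_succ]
    obtain ⟨j, hj, k, hk, -, heq⟩ | heq := D.leftEnd_succ_cases n t
    · have := D.mul_width_succ_add_le hk
      have : 0 ≤ D.h (n + 1) * D.width (n + 1) := by positivity
      linarith [ih hj]
    · have hle : (t : ℝ) + 1 ≤ D.h (n + 1) := mod_cast ht
      have := mul_le_mul_of_nonneg_right hle hwidth.le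
      linarith

lemma Ioo_leftEnd_add_subset (hk : k < D.r n) :
    Ioo (D.leftEnd n j + k * D.width (n + 1))
        (D.leftEnd n j + k * D.width (n + 1) + D.width (n + 1)) ⊆
      Ioo (D.leftEnd n j) (D.leftEnd n j + D.width n) := by
  have := D.mul_width_succ_add_le hk
  have : 0 ≤ k * D.width (n + 1) := mul_nonneg k.cast_nonneg width_pos.le
  exact Ioo_subset_Ioo (by linarith) (by linarith)

lemma disjoint_Ioo_leftEnd_rightEnd (hj : j < D.h n) (hk : k < D.r n) (t : ℕ) :
    Disjoint (Ioo (D.leftEnd n j + k * D.width (n + 1))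
        (D.leftEnd n j + k * D.width (n + 1) + D.width (n + 1)))
      (Ioo (D.rightEnd n + t * D.width (n + 1))
        (D.rightEnd n + t * D.width (n + 1) + D.width (n + 1))) := by
  refine Disjoint.mono_left (Ioo_leftEnd_add_subset hk) (Ioo_disjoint_Ioo.2 ?_)
  have := leftEnd_add_width_le hj
  have : 0 ≤ t * D.width (n + 1) := mul_nonneg t.cast_nonneg width_pos.le
  exact (min_le_left _ _).trans (le_max_of_le_right (by linarith))

lemma disjoint_Ioo_leftEnd {t t' : ℕ} (ht : t < D.h n) (ht' : t' < D.h n) (htt : t ≠ t') :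
    Disjoint (Ioo (D.leftEnd n t) (D.leftEnd n t + D.width n))
      (Ioo (D.leftEnd n t') (D.leftEnd n t' + D.width n)) := by
  induction n generalizing t t' with
  | zero =>
    rw [D.h_zero] at ht ht'
    omega
  | succ n ih =>
    have hwidth := (D.width_pos (n := n + 1)).le
    obtain ⟨j, hj, k, hk, rfl, heq⟩ | heq := D.leftEnd_succ_cases n t <;>
      obtain ⟨j', hj', k', hk', rfl, heq'⟩ | heq' := D.leftEnd_succ_cases n t' <;>
      rw [heq, heq']
    · by_cases hjj : j = j'
      · subst hjj
        exact disjoint_Ioo_add_mul hwidth fun hkk => htt (by rw [hkk])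
      · exact (ih hj hj' hjj).mono (Ioo_leftEnd_add_subset hk) (Ioo_leftEnd_add_subset hk')
    · exact disjoint_Ioo_leftEnd_rightEnd hj hk t'
    · exact (disjoint_Ioo_leftEnd_rightEnd hj' hk' t).symm
    · exact disjoint_Ioo_add_mul hwidth htt

variable (D) in
/-- The standard realization of cutting data, with spacers taken consecutively from `ℝ`. -/
noncomputable def columns : Columns where
  toCuttingData := D
  pos := D.leftEnd
  pos_zero := rfl
  disjoint_Ioo _ _ hj _ hj' hjj := disjoint_Ioo_leftEnd hj hj' hjj
  pos_offset_add _ _ hj _ hk := leftEnd_offset_add hj hk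

variable (D) in
lemma exists_rankOne : ∃ S : RankOne, S.cuttingData = D := D.columns.exists_rankOne

end CuttingData

/-! ### Measure and phases of columns -/

namespace Columns

open CuttingData

variable (C : Columns)

/-- The `i`-th of the `r n` subcolumns into which column `n` is cut. -/
def subcolumn (n i : ℕ) : Set ℝ := ⋃ j < C.h n, C.lvl (n + 1) (C.offset n i + j)

/-- The points in a level of height congruent to `a` modulo `h n`, in a column from the `n`-th
on. -/
def phaseSet (n a : ℕ) : Set ℝ :=
  {x | ∃ p j, n ≤ p ∧ j < C.h p ∧ j ≡ a [MOD C.h n] ∧ x ∈ C.lvl p j}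

variable {C} {m n i j a b : ℕ} {x : ℝ}

lemma volume_lvl : volume (C.lvl n j) = ENNReal.ofReal (C.width n) := by
  rw [lvl, Real.volume_Ioo, add_sub_cancel_left]

lemma volume_biUnion_lvl {J : Finset ℕ} (hJ : ∀ j ∈ J, j < C.h n) :
    volume (⋃ j ∈ J, C.lvl n j) = J.card * ENNReal.ofReal (C.width n) := by
  have hdisj : (J : Set ℕ).PairwiseDisjoint (C.lvl n) := fun i hi j hj hij =>
    C.disjoint_Ioo n i (hJ i hi) j (hJ j hj) hij
  rw [measure_biUnion_finset hdisj fun _ _ => isOpen_lvl.measurableSet]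
  simp only [volume_lvl, Finset.sum_const, nsmul_eq_mul]

lemma volume_column : volume (C.column n) = C.h n * ENNReal.ofReal (C.width n) := by
  have hcolumn : C.column n = ⋃ j ∈ Finset.range (C.h n), C.lvl n j := by
    simp only [column, Finset.mem_range]
  rw [hcolumn, volume_biUnion_lvl fun j => Finset.mem_range.1, Finset.card_range]

lemma volume_space_eq_top (hC : C.SpacersDominate) : volume C.space = ⊤ := by
  refine top_unique (le_of_tendsto' (ENNReal.tendsto_ofReal_atTop.comp
    (tendsto_pow_atTop_atTop_of_one_lt (one_lt_two (α := ℝ)))) fun n => ?_)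
  calc ENNReal.ofReal (2 ^ n) ≤ ENNReal.ofReal (C.h n * C.width n) :=
        ENNReal.ofReal_le_ofReal hC.two_pow_le_h_mul_width
    _ = volume (C.column n) := by
        rw [ENNReal.ofReal_mul (Nat.cast_nonneg _), ENNReal.ofReal_natCast, volume_column]
    _ ≤ volume C.space := measure_mono (subset_iUnion C.column n)

lemma ae_exists_above : ∀ᵐ x ∂volume.restrict C.space, ∃ y, C.Above x y := by
  rw [ae_restrict_iff' isOpen_space.measurableSet]
  refine measure_mono_null (fun x hx => ?_) (C.countable_space_sdiff_domain_above.measure_zero _)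
  exact Classical.not_imp.1 hx

lemma ae_mem_iUnion_core : ∀ᵐ x ∂volume.restrict C.space, x ∈ ⋃ n, C.core n := by
  rw [ae_restrict_iff' isOpen_space.measurableSet]
  filter_upwards [C.countable_cutPoints.ae_notMem volume] with x hcut hx
  obtain ⟨n, hn⟩ := mem_iUnion.1 hx
  exact mem_iUnion.2 ⟨n, hn, hcut⟩

lemma measurableSet_core : MeasurableSet (C.core n) :=
  isOpen_column.measurableSet.diff countable_cutPoints.measurableSet

lemma lvl_subset_column_of_mem (hmn : m ≤ n) (hj : j < C.h n) (hx : x ∈ C.lvl n j)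
    (hxm : x ∈ C.column m) : C.lvl n j ⊆ C.column m := by
  obtain ⟨i, hi, hxi⟩ := mem_column.1 hxm
  obtain ⟨g, hg, rfl⟩ := exists_isCopy_of_inter_nonempty hmn hi hj ⟨x, hxi, hx⟩
  exact (lvl_subset_of_isCopy hg hi).trans (lvl_subset_column hi)

lemma r_mul_volume_inter_subcolumn_le (hmn : m ≤ n) (hi : i < C.r n) :
    C.r n * volume (C.column m ∩ C.subcolumn n i) ≤ volume (C.column m) := by
  classical
  let J : Finset ℕ := {j ∈ Finset.range (C.h n) | C.lvl n j ⊆ C.column m}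
  have hJ : ∀ j ∈ J, j < C.h n ∧ C.lvl n j ⊆ C.column m := fun j hj => by
    simpa only [J, Finset.mem_filter, Finset.mem_range] using hj
  have hcover : C.column m ∩ C.subcolumn n i ⊆ ⋃ j ∈ J, C.lvl (n + 1) (C.offset n i + j) := by
    rintro x ⟨hxm, hxi⟩
    simp only [subcolumn, mem_iUnion] at hxi
    obtain ⟨j, hj, hxj⟩ := hxi
    have hsub := lvl_subset_column_of_mem hmn hj (lvl_offset_add_subset hj hi hxj) hxm
    exact mem_biUnion (Finset.mem_filter.2 ⟨Finset.mem_range.2 hj, hsub⟩) hxj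
  calc C.r n * volume (C.column m ∩ C.subcolumn n i)
      ≤ C.r n * (J.card * ENNReal.ofReal (C.width (n + 1))) := by
        gcongr
        refine (measure_mono hcover).trans ((measure_biUnion_finset_le _ _).trans_eq ?_)
        simp only [volume_lvl, Finset.sum_const, nsmul_eq_mul]
    _ = volume (⋃ j ∈ J, C.lvl n j) := by
        rw [volume_biUnion_lvl fun j hj => (hJ j hj).1, mul_left_comm,
          ← C.r_mul_width_succ (n := n), ENNReal.ofReal_mul (Nat.cast_nonneg _),
          ENNReal.ofReal_natCast]
    _ ≤ volume (C.column m) := measure_mono (iUnion₂_subset fun j hj => (hJ j hj).2)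

lemma exists_mem_lvl_of_mem_core (hC : C.SpacersDominate) (hmn : m < n) (hx : x ∈ C.core m) :
    ∃ i < C.r n, ∃ a, 2 * a < C.h n ∧ 2 * (C.offset n i + a) < C.h (n + 1) ∧
      x ∈ C.lvl (n + 1) (C.offset n i + a) := by
  obtain ⟨t, ht, hxt⟩ := mem_column.1 hx.1
  obtain ⟨g, hg, hxg⟩ := exists_isCopy_of_mem_lvl hmn.le ht hxt hx.2
  obtain ⟨i, hi, hxi⟩ := exists_mem_lvl_offset_add (hg.add_lt ht) hxg hx.2
  refine ⟨i, hi, g + t, hC.two_mul_isCopy_add_lt hmn hg ht, ?_, hxi⟩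
  rw [← add_assoc]
  exact hC.two_mul_isCopy_add_lt (Nat.lt_succ_of_lt hmn) (hg.step hi) ht

lemma lvl_subset_phaseSet (ha : a < C.h n) : C.lvl n a ⊆ C.phaseSet n a :=
  fun _ hx => ⟨n, a, le_rfl, ha, rfl, hx⟩

lemma modEq_of_mem_phaseSet (hC : C.HeightDvdSpacers) (ha : x ∈ C.phaseSet n a)
    (hb : x ∈ C.phaseSet n b) : a ≡ b [MOD C.h n] := by
  obtain ⟨p, i, hp, hi, hia, hxi⟩ := ha
  obtain ⟨q, j, hq, hj, hjb, hxj⟩ := hb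
  wlog hpq : p ≤ q generalizing p q i j a b
  · exact (this q j hq hj hjb hxj p i hp hi hia hxi (le_of_not_ge hpq)).symm
  obtain ⟨g, hg, rfl⟩ := exists_isCopy_of_inter_nonempty hpq hi hj ⟨x, hxi, hxj⟩
  have hdvd : C.h n ∣ g := (hC.dvd_h hp).trans (hC.dvd_of_isCopy hg)
  have hgi : g + i ≡ i [MOD C.h n] := Nat.add_modEq_right_iff.2 hdvd
  exact hia.symm.trans (hgi.symm.trans hjb)

end Columns

/-! ### Dynamics of rank-one transformations -/

namespace RankOne

open CuttingData

variable {S : RankOne} {m n j k a b : ℕ} {x : ℝ} {A B F : Set ℝ}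

lemma w_eq_width : S.w n = S.cuttingData.width n := by
  induction n with
  | zero => exact S.w0.trans (Finset.prod_range_zero _).symm
  | succ n ih => rw [S.wrec, ih, width_succ]; rfl

/-- The columns of a rank-one transformation. -/
def columns (S : RankOne) : Columns where
  toCuttingData := S.cuttingData
  pos := S.pos
  pos_zero := S.pos0
  disjoint_Ioo n := by rw [← w_eq_width]; exact S.disj n
  pos_offset_add n := by rw [← w_eq_width]; exact S.stack n

lemma X_eq_space : S.X = S.columns.space := by
  have hX := S.hX
  simp only [w_eq_width] at hX
  exact hX

lemma μ_eq_restrict : S.μ = volume.restrict S.columns.space := by rw [μ, X_eq_space]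

lemma μ_le_volume (A : Set ℝ) : S.μ A ≤ volume A := Measure.le_iff'.1 Measure.restrict_le_self A

lemma measurePreserving_T : MeasurePreserving S.T S.μ S.μ := S.Tpres

lemma T_mem_lvl (hj : j + 1 < S.h n) (hx : x ∈ S.columns.lvl n j) :
    S.T x ∈ S.columns.lvl n (j + 1) := by
  have hTx : S.T x = x + S.columns.gap n j :=
    S.Tmap n j hj x (w_eq_width (S := S) ▸ hx)
  exact hTx ▸ Columns.add_gap_mem_lvl hx

lemma iterate_T_mem_lvl (hjk : j + k < S.h n) (hx : x ∈ S.columns.lvl n j) :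
    S.T^[k] x ∈ S.columns.lvl n (j + k) := by
  induction k with
  | zero => exact hx
  | succ k ih =>
    rw [Function.iterate_succ_apply']
    exact T_mem_lvl hjk (ih (Nat.lt_of_succ_lt hjk))

lemma volume_X_eq_top (hS : S.cuttingData.SpacersDominate) : volume S.X = ⊤ :=
  X_eq_space (S := S) ▸ Columns.volume_space_eq_top hS

lemma exists_offset_add_eq_of_return (hS : S.cuttingData.SpacersDominate) (hmn : m < n)
    (hk : 2 * k < S.h (n + 1)) (hx : x ∈ S.columns.core m) (hTx : S.T^[k] x ∈ S.columns.core m) :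
    ∃ i, ∃ i' < S.r n, ∃ a a', 2 * a < S.h n ∧ 2 * a' < S.h n ∧
      S.columns.offset n i + a + k = S.columns.offset n i' + a' ∧
      S.T^[k] x ∈ S.columns.lvl (n + 1) (S.columns.offset n i' + a') := by
  obtain ⟨i, -, a, ha, hia, hxi⟩ := Columns.exists_mem_lvl_of_mem_core hS hmn hx
  obtain ⟨i', hi', a', ha', hia', hTxi⟩ := Columns.exists_mem_lvl_of_mem_core hS hmn hTx
  have hlt : S.columns.offset n i + a + k < S.h (n + 1) := by
    change 2 * _ < S.h (n + 1) at hia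
    omega
  have hlt' : S.columns.offset n i' + a' < S.columns.h (n + 1) := by omega
  exact ⟨i, i', hi', a, a', ha, ha',
    Columns.eq_of_mem_lvl hlt hlt' (iterate_T_mem_lvl hlt hxi) hTxi, hTxi⟩

lemma exists_inter_image_core_subset_subcolumn (hS : S.cuttingData.SpacersDominate) (hmn : m < n)
    (hlow : S.h n ≤ 2 * k) (hupp : 2 * k < S.h (n + 1)) :
    ∃ i < S.r n, S.columns.core m ∩ S.T^[k] '' S.columns.core m ⊆ S.columns.subcolumn n i := by
  obtain hempty | ⟨_, hTx, x, hx, rfl⟩ :=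
    (S.columns.core m ∩ S.T^[k] '' S.columns.core m).eq_empty_or_nonempty
  · exact ⟨0, two_pos.trans_le (S.hr n), hempty ▸ empty_subset _⟩
  obtain ⟨i, i', hi', a, a', ha, ha', heq, -⟩ := exists_offset_add_eq_of_return hS hmn hupp hx hTx
  refine ⟨i', hi', ?_⟩
  rintro _ ⟨hTy, y, hy, rfl⟩
  obtain ⟨p, p', hp', b, b', hb, hb', heq', hmem⟩ :=
    exists_offset_add_eq_of_return hS hmn hupp hy hTy
  obtain rfl : i' = p' := hS.eq_of_offset_add_eq hi' hp' hlow ha ha' hb hb' heq heq'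
  exact mem_biUnion (show b' < S.h n by omega) hmem

lemma r_mul_μ_inter_image_core_le (hS : S.cuttingData.SpacersDominate) (hmn : m < n)
    (hlow : S.h n ≤ 2 * k) (hupp : 2 * k < S.h (n + 1)) :
    S.r n * S.μ (S.columns.core m ∩ S.T^[k] '' S.columns.core m) ≤
      volume (S.columns.column m) := by
  obtain ⟨i, hi, hsub⟩ := exists_inter_image_core_subset_subcolumn hS hmn hlow hupp
  refine le_trans ?_ (Columns.r_mul_volume_inter_subcolumn_le hmn.le hi)
  refine mul_le_mul_right ((μ_le_volume _).trans (measure_mono ?_)) _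
  exact subset_inter (inter_subset_left.trans sdiff_subset) hsub

lemma tendsto_μ_inter_image_core (hS : S.cuttingData.SpacersDominate)
    (hr : Tendsto S.r atTop atTop) (m : ℕ) :
    Tendsto (fun k => S.μ (S.columns.core m ∩ S.T^[k] '' S.columns.core m)) atTop (𝓝 0) := by
  have hfin : volume (S.columns.column m) ≠ ⊤ := by
    rw [Columns.volume_column]
    exact ENNReal.mul_ne_top (ENNReal.natCast_ne_top _) ENNReal.ofReal_ne_top
  have hlim : Tendsto (fun n => volume (S.columns.column m) / S.r n) atTop (𝓝 0) := by
    rw [← ENNReal.div_top (a := volume (S.columns.column m))]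
    exact ENNReal.Tendsto.const_div (ENNReal.tendsto_nat_nhds_top.comp hr) (Or.inr hfin)
  refine ENNReal.tendsto_nhds_zero.2 fun ε hε => ?_
  obtain ⟨N, hN⟩ := eventually_atTop.1
    ((ENNReal.tendsto_nhds_zero.1 hlim ε hε).and (eventually_gt_atTop m))
  filter_upwards [S.cuttingData.eventually_exists_h_le_two_mul N] with k ⟨n, hn, hlow, hupp⟩
  refine le_trans ?_ (hN n hn).1
  have hr0 : (S.r n : ENNReal) ≠ 0 := Nat.cast_ne_zero.2 (two_pos.trans_le (S.hr n)).ne'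
  rw [ENNReal.le_div_iff_mul_le (Or.inl hr0) (Or.inl (ENNReal.natCast_ne_top _)), mul_comm]
  exact r_mul_μ_inter_image_core_le hS (hN n hn).2 hlow hupp

lemma tendsto_μ_sdiff_core (hA : MeasurableSet A) (hAfin : S.μ A ≠ ⊤) :
    Tendsto (fun m => S.μ (A \ S.columns.core m)) atTop (𝓝 0) := by
  have hnull : S.μ (⋂ m, A \ S.columns.core m) = 0 := by
    rw [← sdiff_iUnion, μ_eq_restrict]
    exact measure_mono_null (fun x hx => hx.2) Columns.ae_mem_iUnion_core
  rw [← hnull]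
  exact tendsto_measure_iInter_atTop
    (fun m => (hA.diff Columns.measurableSet_core).nullMeasurableSet)
    (fun m n hmn => sdiff_subset_sdiff_right (Columns.monotone_core hmn))
    ⟨0, measure_ne_top_of_subset sdiff_subset hAfin⟩

theorem zeroType_of_spacersDominate (hS : S.cuttingData.SpacersDominate)
    (hr : Tendsto S.r atTop atTop) : S.ZeroType := fun _ hA hAfin =>
  tendsto_measure_inter_image_of_exhaustion measurePreserving_T (tendsto_μ_sdiff_core hA hAfin)
    (tendsto_μ_inter_image_core hS hr)

lemma T_mem_phaseSet (hS : S.cuttingData.HeightDvdSpacers) (hx : x ∈ S.columns.phaseSet n a)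
    (habove : ∃ y, S.columns.Above x y) : S.T x ∈ S.columns.phaseSet n (a + 1) := by
  obtain ⟨p, i, hp, hi, hia, hxi⟩ := hx
  obtain ⟨q, j, hj, hxj⟩ := Columns.exists_above_iff_mem_lvl.1 habove
  have hj' := Nat.lt_of_succ_lt hj
  obtain hpq | hqp := le_total p q
  · have hja : j ≡ a [MOD S.h n] := Columns.modEq_of_mem_phaseSet hS
      ⟨q, j, hp.trans hpq, hj', rfl, hxj⟩ ⟨p, i, hp, hi, hia, hxi⟩
    exact ⟨q, j + 1, hp.trans hpq, hj, hja.add_right 1, T_mem_lvl hj hxj⟩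
  · obtain ⟨g, hg, rfl⟩ := Columns.exists_isCopy_of_inter_nonempty hqp hj' hi ⟨x, hxj, hxi⟩
    exact ⟨p, g + j + 1, hp, hg.add_lt hj, hia.add_right 1, T_mem_lvl (hg.add_lt hj) hxi⟩

lemma ae_iterate_T_mem_phaseSet (hS : S.cuttingData.HeightDvdSpacers) (n a : ℕ) :
    ∀ᵐ x ∂S.μ, x ∈ S.columns.phaseSet n a → ∀ k, S.T^[k] x ∈ S.columns.phaseSet n (a + k) := by
  have habove : ∀ᵐ x ∂S.μ, ∃ y, S.columns.Above x y := μ_eq_restrict ▸ Columns.ae_exists_above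
  filter_upwards [ae_forall_iterate measurePreserving_T habove] with x hx ha k
  induction k with
  | zero => exact ha
  | succ k ih =>
    rw [Function.iterate_succ_apply']
    exact T_mem_phaseSet hS ih (hx k)

lemma μ_inter_image_eq_zero (hS : S.cuttingData.HeightDvdSpacers) (ha : a < S.h n)
    (hb : b < S.h n) (hA : A ⊆ S.columns.lvl n a) (hB : B ⊆ S.columns.lvl n b)
    (hk : ¬ b + k ≡ a [MOD S.h n]) : S.μ (A ∩ S.T^[k] '' B) = 0 := by
  rw [measure_inter_image_iterate measurePreserving_T]
  refine measure_eq_zero_iff_ae_notMem.2 ?_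
  filter_upwards [ae_iterate_T_mem_phaseSet hS n b] with x hphase hx
  refine hk ?_
  exact Columns.modEq_of_mem_phaseSet hS
    (hphase (Columns.lvl_subset_phaseSet hb (hB hx.2)) k)
    (Columns.lvl_subset_phaseSet ha (hA hx.1))

lemma exists_μ_inter_lvl_ne_zero (hA : A ⊆ S.columns.column n) (hpos : S.μ A ≠ 0) :
    ∃ j < S.h n, S.μ (A ∩ S.columns.lvl n j) ≠ 0 := by
  contrapose! hpos
  refine measure_mono_null (t := ⋃ j < S.h n, A ∩ S.columns.lvl n j) (fun x hx => ?_)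
    ((measure_biUnion_null_iff (to_countable _)).2 hpos)
  obtain ⟨j, hj, hxj⟩ := Columns.mem_column.1 (hA hx)
  exact mem_biUnion (show j < S.h n from hj) ⟨hx, hxj⟩

lemma exists_μ_inter_core_ne_zero (hF : S.μ F ≠ 0) : ∃ m, S.μ (F ∩ S.columns.core m) ≠ 0 := by
  contrapose! hF
  have hnull : S.μ (⋃ m, S.columns.core m)ᶜ = 0 :=
    μ_eq_restrict (S := S) ▸ Columns.ae_mem_iUnion_core
  rw [← measure_inter_conull hnull, inter_iUnion]
  exact measure_iUnion_null hF

lemma exists_two_lvl_μ_inter_ne_zero (hF : S.μ F ≠ 0) :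
    ∃ n, ∃ a < S.h n, ∃ b < S.h n, a ≠ b ∧
      S.μ (F ∩ S.columns.lvl n a) ≠ 0 ∧ S.μ (F ∩ S.columns.lvl n b) ≠ 0 := by
  obtain ⟨m, hm⟩ := exists_μ_inter_core_ne_zero hF
  have hwidth : Tendsto (fun n => ENNReal.ofReal (S.columns.width n)) atTop (𝓝 0) :=
    ENNReal.ofReal_zero ▸ ENNReal.tendsto_ofReal tendsto_width
  obtain ⟨n, hn, hmn⟩ :=
    ((hwidth.eventually_lt_const (pos_iff_ne_zero.2 hm)).and (eventually_ge_atTop m)).exists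
  have hcolumn : F ∩ S.columns.core m ⊆ S.columns.column n := fun x hx =>
    (Columns.monotone_core hmn hx.2).1
  obtain ⟨a, ha, hFa⟩ := exists_μ_inter_lvl_ne_zero hcolumn hm
  have hrest : S.μ ((F ∩ S.columns.core m) \ S.columns.lvl n a) ≠ 0 := fun hzero => by
    have hle : S.μ (S.columns.lvl n a) ≤ ENNReal.ofReal (S.columns.width n) :=
      (μ_le_volume _).trans_eq Columns.volume_lvl
    exact (hn.trans_le ((measure_mono_ae (ae_le_set.2 hzero)).trans hle)).false
  obtain ⟨b, hb, hFb⟩ := exists_μ_inter_lvl_ne_zero (sdiff_subset.trans hcolumn) hrest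
  refine ⟨n, a, ha, b, hb, ?_, fun hzero => hFa ?_, fun hzero => hFb ?_⟩
  · rintro rfl
    exact hFb (by rw [sdiff_inter_self, measure_empty])
  · exact measure_mono_null (inter_subset_inter_left _ inter_subset_left) hzero
  · exact measure_mono_null
      (inter_subset_inter_left _ (sdiff_subset.trans inter_subset_left)) hzero

lemma RWMOn.a_pos (hF : S.RWMOn F) (hn : n ≠ 0) : 0 < S.a F n := by
  have hpos : 0 < (S.μ F).toReal := ENNReal.toReal_pos hF.2.1.ne' hF.2.2.1
  have hu : 0 < S.u F 0 := by
    simp only [u, Function.iterate_zero, image_id, inter_self]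
    positivity
  exact hu.trans_le (Finset.single_le_sum (f := S.u F)
    (fun k _ => by unfold u; positivity) (Finset.mem_range.2 (Nat.pos_of_ne_zero hn)))

/-- At each time one of the two correlations vanishes, so the mixing averages for `A, A` and `A, B`
add up to at least a constant multiple of `a n F / a n F = 1`. -/
lemma not_rwmOn_of_forall_μ_inter_eq_zero (hA : MeasurableSet A) (hAF : A ⊆ F)
    (hB : MeasurableSet B) (hBF : B ⊆ F) (hμA : S.μ A ≠ 0) (hμB : S.μ B ≠ 0)
    (hk : ∀ k, S.μ (A ∩ S.T^[k] '' A) = 0 ∨ S.μ (A ∩ S.T^[k] '' B) = 0) : ¬ S.RWMOn F := by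
  intro hF
  have hα : 0 < (S.μ A).toReal :=
    ENNReal.toReal_pos hμA (measure_ne_top_of_subset hAF hF.2.2.1)
  have hβ : 0 < (S.μ B).toReal :=
    ENNReal.toReal_pos hμB (measure_ne_top_of_subset hBF hF.2.2.1)
  set c : ℝ := min ((S.μ A).toReal * (S.μ A).toReal) ((S.μ A).toReal * (S.μ B).toReal)
  have hc : 0 < c := lt_min (mul_pos hα hα) (mul_pos hα hβ)
  have hlim := (hF.2.2.2 A A hA hAF hA hAF).add (hF.2.2.2 A B hA hAF hB hBF)
  rw [add_zero] at hlim
  refine hc.not_ge (ge_of_tendsto hlim ?_)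
  filter_upwards [eventually_ne_atTop 0] with n hn
  rw [← mul_add, ← Finset.sum_add_distrib, ← mul_comm, ← div_eq_mul_inv,
    le_div_iff₀ (hF.a_pos hn), a, Finset.mul_sum]
  refine Finset.sum_le_sum fun k _ => ?_
  have hu : 0 ≤ S.u F k := by unfold u; positivity
  obtain hAA | hAB := hk k
  · refine le_add_of_le_of_nonneg ?_ (abs_nonneg _)
    rw [hAA, ENNReal.toReal_zero, zero_sub, abs_neg]
    exact (mul_le_mul_of_nonneg_right (min_le_left _ _) hu).trans (le_abs_self _)
  · refine le_add_of_nonneg_of_le (abs_nonneg _) ?_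
    rw [hAB, ENNReal.toReal_zero, zero_sub, abs_neg]
    exact (mul_le_mul_of_nonneg_right (min_le_right _ _) hu).trans (le_abs_self _)

theorem not_rwm_of_heightDvdSpacers (hS : S.cuttingData.HeightDvdSpacers) : ¬ S.RWM := by
  rintro ⟨F, hF⟩
  obtain ⟨n, a, ha, b, hb, hab, hFa, hFb⟩ := exists_two_lvl_μ_inter_ne_zero hF.2.1.ne'
  refine not_rwmOn_of_forall_μ_inter_eq_zero
    (hF.1.inter Columns.isOpen_lvl.measurableSet) inter_subset_left
    (hF.1.inter Columns.isOpen_lvl.measurableSet) inter_subset_left hFa hFb (fun k => ?_) hF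
  by_cases hak : a + k ≡ a [MOD S.h n]
  · refine Or.inr (μ_inter_image_eq_zero hS ha hb inter_subset_right inter_subset_right ?_)
    intro hbk
    exact hab ((Nat.ModEq.add_right_cancel' k (hak.trans hbk.symm)).eq_of_lt_of_lt ha hb)
  · exact Or.inl (μ_inter_image_eq_zero hS ha ha inter_subset_right inter_subset_right hak)

end RankOne

/-! ### The doubling example -/

/-- The column heights of `doublingData`. -/
def doublingHeight : ℕ → ℕ
  | 0 => 1
  | n + 1 => ∑ k ∈ Finset.range (n + 2), (doublingHeight n + doublingHeight n * (2 ^ (k + 1) - 1))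

/-- Column `n` is cut into `n + 2` subcolumns, and above each of them the height of the new column
built so far is doubled: `s n k` is the closed form of `offset n k + h n`. -/
def doublingData : CuttingData where
  r n := n + 2
  s n k := doublingHeight n * (2 ^ (k + 1) - 1)
  h := doublingHeight
  two_le_r n := Nat.le_add_left 2 n
  h_zero := rfl
  h_succ _ := rfl

lemma doublingData_offset_add_h (n k : ℕ) :
    doublingData.offset n k + doublingData.h n = doublingData.s n k := by
  induction k with
  | zero => simp [CuttingData.offset_zero, doublingData]
  | succ k ih =>
    have hdouble : 2 ^ (k + 1 + 1) - 1 = (2 ^ (k + 1) - 1) + (2 ^ (k + 1) - 1) + 1 := by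
      have := Nat.one_le_two_pow (n := k + 1)
      omega
    have hs : doublingData.s n (k + 1) =
        doublingData.s n k + doublingData.s n k + doublingData.h n := by
      simp only [doublingData, hdouble, mul_add, mul_one]
    rw [CuttingData.offset_succ, hs, ← ih]
    ring

lemma spacersDominate_doublingData : doublingData.SpacersDominate := fun n k _ =>
  (doublingData_offset_add_h n k).le

lemma heightDvdSpacers_doublingData : doublingData.HeightDvdSpacers := fun _ _ _ =>
  Nat.dvd_mul_right _ _

lemma tendsto_r_doublingData : Tendsto doublingData.r atTop atTop := tendsto_add_atTop_nat 2

/-- There exists a rank-one transformation of an infinite σ-finite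
nonatomic measure space which is zero-type but not rationally weakly mixing. -/
theorem statement17 :
    ∃ S : RankOne, volume S.X = ⊤ ∧ S.ZeroType ∧ ¬ S.RWM := by
  obtain ⟨S, hS⟩ := doublingData.exists_rankOne
  have hdom : S.cuttingData.SpacersDominate := hS ▸ spacersDominate_doublingData
  have hdvd : S.cuttingData.HeightDvdSpacers := hS ▸ heightDvdSpacers_doublingData
  have hr : Tendsto S.cuttingData.r atTop atTop := hS ▸ tendsto_r_doublingData
  exact ⟨S, S.volume_X_eq_top hdom, S.zeroType_of_spacersDominate hdom hr,
    S.not_rwm_of_heightDvdSpacers hdvd⟩
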